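/- Let φ = (1+√5)/2 and define R(x) = 1 if 1 ≤ x < φ, R(x) = 3/2 if φ ≤ x < 2, and R(x) = ⌊x⌋ if x ≥ 2. Let v > 0 and let S and S' be finite multisets of real numbers, each element at least 1. Suppose ∑_{x ∈ S'} x ≤ v and 1 + ∑_{x ∈ S} x > φ·v. Then ∑_{x ∈ S'} R(x) ≤ ∑_{x ∈ S} R(x). -/

import Mathlib

/-!
STATEMENT 12: The per-drone comparison of rounded loads
(`L'_i(Opt) ≤ L'_i(Alg_0)`, Lemma "main" of the paper):
for the rounding function `R`, if `S, S'` are finite multisets of reals each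
at least `1`, `∑_{x ∈ S'} x ≤ v` and `1 + ∑_{x ∈ S} x > φ·v`, then
`∑_{x ∈ S'} R x ≤ ∑_{x ∈ S} R x`, where `φ = (1+√5)/2`.
-/

/-- The rounding function from the paper's analysis of LPT:
`R x = 1` if `1 ≤ x < φ`, `R x = 3/2` if `φ ≤ x < 2`, `R x = ⌊x⌋` if `x ≥ 2`,
where `φ = (1+√5)/2`. -/
noncomputable def R (x : ℝ) : ℝ :=
  if x < (1 + Real.sqrt 5) / 2 then 1
  else if x < 2 then 3 / 2
  else (⌊x⌋ : ℝ)

lemma phi_bounds : (1.6 : ℝ) < (1 + Real.sqrt 5) / 2 ∧ (1 + Real.sqrt 5) / 2 < 1.62 ∧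
    ((1 + Real.sqrt 5) / 2) * ((1 + Real.sqrt 5) / 2) = (1 + Real.sqrt 5) / 2 + 1 := by
  have h := Real.mul_self_sqrt (show (0 : ℝ) ≤ 5 by norm_num)
  have h0 := Real.sqrt_nonneg 5
  refine ⟨?_, ?_, ?_⟩ <;> nlinarith

lemma R_cases (x : ℝ) (hx : 1 ≤ x) :
    (∃ n : ℤ, R x = n ∧ R x ≤ x ∧ x ≤ (1 + Real.sqrt 5) / 2 * R x) ∨
    (R x = 3 / 2 ∧ (1 + Real.sqrt 5) / 2 ≤ x ∧ x ≤ 2) := by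
  obtain ⟨h1, h2, -⟩ := phi_bounds
  unfold R
  split_ifs with ha hb
  · left
    exact ⟨1, by norm_num, hx, by linarith⟩
  · right
    exact ⟨rfl, by linarith, by linarith⟩
  · left
    refine ⟨⌊x⌋, rfl, Int.floor_le x, ?_⟩
    have h3 : (2 : ℤ) ≤ ⌊x⌋ := Int.le_floor.mpr (by push_cast; linarith)
    have h4 : (2 : ℝ) ≤ (⌊x⌋ : ℝ) := by exact_mod_cast h3
    have h5 := Int.lt_floor_add_one x
    nlinarith

lemma opt_cases (S : Multiset ℝ) : (∀ x ∈ S, (1 : ℝ) ≤ x) →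
    (∃ n : ℤ, (S.map R).sum = n ∧ (S.map R).sum ≤ S.sum) ∨
    (∃ n : ℤ, 2 * (S.map R).sum = n ∧
      (S.map R).sum + (1 + Real.sqrt 5) / 2 - 3 / 2 ≤ S.sum) := by
  obtain ⟨h1, h2, -⟩ := phi_bounds
  induction S using Multiset.induction_on with
  | empty => intro _; left; exact ⟨0, by simp⟩
  | cons a S ih =>
    intro h
    have ih := ih (fun x hx => h x (Multiset.mem_cons_of_mem hx))
    have ha := R_cases a (h a (Multiset.mem_cons_self a S))
    simp only [Multiset.map_cons, Multiset.sum_cons]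
    rcases ih with ⟨n, e, l⟩ | ⟨n, e, l⟩ <;> rcases ha with ⟨m, e', l', -⟩ | ⟨e', l', -⟩
    · left; exact ⟨m + n, by push_cast; linarith, by linarith⟩
    · right; exact ⟨3 + 2 * n, by push_cast; linarith, by linarith⟩
    · right; exact ⟨2 * m + n, by push_cast; linarith, by linarith⟩
    · right; exact ⟨3 + n, by push_cast; linarith, by linarith⟩

lemma alg_cases (S : Multiset ℝ) : (∀ x ∈ S, (1 : ℝ) ≤ x) →
    (∃ n : ℤ, (S.map R).sum = n ∧ S.sum ≤ (1 + Real.sqrt 5) / 2 * (S.map R).sum) ∨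
    (∃ n : ℤ, 2 * (S.map R).sum = n ∧
      S.sum ≤ (1 + Real.sqrt 5) / 2 * ((S.map R).sum - 3 / 2) + 2) := by
  obtain ⟨h1, h2, -⟩ := phi_bounds
  induction S using Multiset.induction_on with
  | empty => intro _; left; exact ⟨0, by simp⟩
  | cons a S ih =>
    intro h
    have ih := ih (fun x hx => h x (Multiset.mem_cons_of_mem hx))
    have ha := R_cases a (h a (Multiset.mem_cons_self a S))
    simp only [Multiset.map_cons, Multiset.sum_cons]
    generalize (1 + Real.sqrt 5) / 2 = p at *
    rcases ih with ⟨n, e, l⟩ | ⟨n, e, l⟩ <;> rcases ha with ⟨m, e', -, l'⟩ | ⟨e', -, l'⟩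
    · left; exact ⟨m + n, by push_cast; linarith, by linarith⟩
    · right; exact ⟨3 + 2 * n, by push_cast; linarith, by rw [e']; linarith⟩
    · right; exact ⟨2 * m + n, by push_cast; linarith, by linarith⟩
    · right; exact ⟨3 + n, by push_cast; linarith, by rw [e']; linarith⟩

/-- If each element of the finite multisets `S` and `S'` is at least `1`,
`∑_{x ∈ S'} x ≤ v` and `1 + ∑_{x ∈ S} x > φ·v`, then
`∑_{x ∈ S'} R x ≤ ∑_{x ∈ S} R x`. -/
theorem rounded_load_comparison (v : ℝ) (hv : 0 < v)
    (S S' : Multiset ℝ)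
    (hS : ∀ x ∈ S, (1 : ℝ) ≤ x) (hS' : ∀ x ∈ S', (1 : ℝ) ≤ x)
    (hOpt : S'.sum ≤ v)
    (hAlg : 1 + S.sum > (1 + Real.sqrt 5) / 2 * v) :
    (S'.map R).sum ≤ (S.map R).sum := by
  obtain ⟨h1, h2, h3⟩ := phi_bounds
  have hA := alg_cases S hS
  have hO := opt_cases S' hS'
  generalize (1 + Real.sqrt 5) / 2 = p at *
  generalize (S.map R).sum = r at *
  generalize (S'.map R).sum = r' at *
  have weak : v < r + (p - 1) := by
    have : S.sum ≤ p * r := by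
      rcases hA with ⟨n, e, l⟩ | ⟨n, e, l⟩ <;> nlinarith
    by_contra hc
    push Not at hc
    nlinarith
  rcases hO with ⟨m, e', l'⟩ | ⟨m, e', l'⟩
  · rcases hA with ⟨n, e, l⟩ | ⟨n, e, l⟩
    · have : (m : ℝ) < n + 1 := by linarith
      have : m < n + 1 := by exact_mod_cast this
      have : (m : ℝ) ≤ n := by exact_mod_cast Int.lt_add_one_iff.mp this
      linarith
    · have strong : v < r + 1 / 2 := by
        by_contra hc
        push Not at hc
        nlinarith
      have : ((2 * m : ℤ) : ℝ) < ((n + 1 : ℤ) : ℝ) := by push_cast; linarith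
      have : 2 * m < n + 1 := by exact_mod_cast this
      have : ((2 * m : ℤ) : ℝ) ≤ n := by exact_mod_cast Int.lt_add_one_iff.mp this
      push_cast at this
      linarith
  · obtain ⟨n, e⟩ : ∃ n : ℤ, 2 * r = n := by
      rcases hA with ⟨n, e, l⟩ | ⟨n, e, l⟩
      · exact ⟨2 * n, by push_cast; linarith⟩
      · exact ⟨n, e⟩
    have : (m : ℝ) < n + 1 := by linarith
    have : m < n + 1 := by exact_mod_cast this
    have : (m : ℝ) ≤ n := by exact_mod_cast Int.lt_add_one_iff.mp this
    linarith
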